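/- Let σ1, σ2 : ℂ, assume Q is symmetric, and assume G(σ1), G(σ2), G(σ1+σ2), Wᵀ * G(σ1) * V, Wᵀ * G(σ2) * V and Wᵀ * G(σ1+σ2) * V are invertible. If x1(σ1), x1(σ2), x2(σ1, σ2) lie in the column span of V and y1(σ1+σ2), y2(σ1, σ2) lie in the column span of W, then the reduced model matches the first partial derivative of the second-order transfer function: deriv (fun s => H2(s, σ2)) σ1 = deriv (fun s => Ĥ2(s, σ2)) σ1. -/

import Mathlib

open Matrix
open scoped Kronecker

noncomputable section

/-- Kronecker product of vectors: `(u ⊗ v) (l, j) = u l * v j`. -/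
def vkron {n : ℕ} (u v : Fin n → ℂ) : Fin n × Fin n → ℂ :=
  fun p => u p.1 * v p.2

/-- The matrix pencil `G(s) = s • E - A`. -/
def Gm {n : ℕ} (E A : Matrix (Fin n) (Fin n) ℂ) (s : ℂ) : Matrix (Fin n) (Fin n) ℂ :=
  s • E - A

/-- Primal state of the first subsystem: `x1(s) = G(s)⁻¹ *ᵥ B`. -/
def x1 {n : ℕ} (E A : Matrix (Fin n) (Fin n) ℂ) (B : Fin n → ℂ) (s : ℂ) : Fin n → ℂ :=
  (Gm E A s)⁻¹ *ᵥ B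

/-- First-order transfer function `H1(s) = C ⬝ᵥ x1(s)`. -/
def H1 {n : ℕ} (E A : Matrix (Fin n) (Fin n) ℂ) (B C : Fin n → ℂ) (s : ℂ) : ℂ :=
  C ⬝ᵥ x1 E A B s

/-- Second-order input term `B₂(s1, s2)`. -/
def B2 {n : ℕ} (E A N : Matrix (Fin n) (Fin n) ℂ) (Q : Matrix (Fin n) (Fin n × Fin n) ℂ)
    (B : Fin n → ℂ) (s1 s2 : ℂ) : Fin n → ℂ :=
  Q *ᵥ vkron (x1 E A B s1) (x1 E A B s2) + (1/2 : ℂ) • (N *ᵥ (x1 E A B s1 + x1 E A B s2))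

/-- Primal state of the second subsystem: `x2(s1, s2) = G(s1+s2)⁻¹ *ᵥ B₂(s1, s2)`. -/
def x2 {n : ℕ} (E A N : Matrix (Fin n) (Fin n) ℂ) (Q : Matrix (Fin n) (Fin n × Fin n) ℂ)
    (B : Fin n → ℂ) (s1 s2 : ℂ) : Fin n → ℂ :=
  (Gm E A (s1 + s2))⁻¹ *ᵥ B2 E A N Q B s1 s2

/-- Second-order (symmetric) transfer function `H2(s1, s2) = C ⬝ᵥ x2(s1, s2)`. -/
def H2 {n : ℕ} (E A N : Matrix (Fin n) (Fin n) ℂ) (Q : Matrix (Fin n) (Fin n × Fin n) ℂ)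
    (B C : Fin n → ℂ) (s1 s2 : ℂ) : ℂ :=
  C ⬝ᵥ x2 E A N Q B s1 s2

/-- Dual state of the first subsystem: `y1(s) = (G(s)ᵀ)⁻¹ *ᵥ C`. -/
def y1 {n : ℕ} (E A : Matrix (Fin n) (Fin n) ℂ) (C : Fin n → ℂ) (s : ℂ) : Fin n → ℂ :=
  ((Gm E A s)ᵀ)⁻¹ *ᵥ C

/-- Mode-2 matricization: `Q⁽²⁾ j (l, i) = Q i (l, j)`. -/
def mode2 {n : ℕ} (Q : Matrix (Fin n) (Fin n × Fin n) ℂ) : Matrix (Fin n) (Fin n × Fin n) ℂ :=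
  fun j p => Q p.2 (p.1, j)

/-- Dual output term `C₂(s1, s2)`. -/
def C2 {n : ℕ} (E A N : Matrix (Fin n) (Fin n) ℂ) (Q : Matrix (Fin n) (Fin n × Fin n) ℂ)
    (B C : Fin n → ℂ) (s1 s2 : ℂ) : Fin n → ℂ :=
  mode2 Q *ᵥ vkron (x1 E A B s2) (y1 E A C (s1 + s2)) +
    (1/2 : ℂ) • (Nᵀ *ᵥ y1 E A C (s1 + s2))

/-- Dual state of the second subsystem: `y2(s1, s2) = (G(s1)ᵀ)⁻¹ *ᵥ C₂(s1, s2)`. -/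
def y2 {n : ℕ} (E A N : Matrix (Fin n) (Fin n) ℂ) (Q : Matrix (Fin n) (Fin n × Fin n) ℂ)
    (B C : Fin n → ℂ) (s1 s2 : ℂ) : Fin n → ℂ :=
  ((Gm E A s1)ᵀ)⁻¹ *ᵥ C2 E A N Q B C s1 s2

/-- `Q` is symmetric: `Q *ᵥ (u ⊗ v) = Q *ᵥ (v ⊗ u)` for all `u, v`. -/
def QSymm {n : ℕ} (Q : Matrix (Fin n) (Fin n × Fin n) ℂ) : Prop :=
  ∀ u v : Fin n → ℂ, Q *ᵥ vkron u v = Q *ᵥ vkron v u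

/-- Euclidean (ℓ²) norm of a vector in `Fin n → ℂ`. -/
def vnorm {n : ℕ} (v : Fin n → ℂ) : ℝ := ‖(WithLp.equiv 2 (Fin n → ℂ)).symm v‖

/-- ℓ²-induced operator norm of a square complex matrix. -/
def mnorm {n : ℕ} (M : Matrix (Fin n) (Fin n) ℂ) : ℝ := ‖Matrix.toEuclideanCLM (𝕜 := ℂ) M‖

/-!
Differentiating the resolvents and moving them onto the output vector by duality gives
`∂H2/∂s1 (s1, s2) = -(y1(s1+s2)ᵀ E x2(s1, s2) + y2(s1, s2)ᵀ E x1(s1))`. Here symmetry of `Q` is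
what allows `C₂`, in which `x1(s2)` occupies the first slot of `Q`, to describe the variation of
`x1(s1)`, which occupies that slot in `B₂`. Petrov-Galerkin projection reproduces every primal
state in the range of `V` and every dual state in the range of `W`, so the same formula for the
reduced model takes the same value.
-/

section Matrix

variable {n k R : Type*} [Fintype n] [CommRing R]

theorem transpose_mulVec_dotProduct {m n R : Type*} [Fintype m] [Fintype n]
    [NonUnitalCommSemiring R] (A : Matrix m n R) (u : m → R) (v : n → R) :
    (Aᵀ *ᵥ u) ⬝ᵥ v = u ⬝ᵥ (A *ᵥ v) := by
  rw [mulVec_transpose, dotProduct_mulVec]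

theorem transpose_inv_mulVec_dotProduct [DecidableEq n] (G : Matrix n n R) (u v : n → R) :
    (Gᵀ⁻¹ *ᵥ u) ⬝ᵥ v = u ⬝ᵥ (G⁻¹ *ᵥ v) := by
  rw [← transpose_nonsing_inv, transpose_mulVec_dotProduct]

theorem petrovGalerkin_inv_mulVec [DecidableEq n] [Fintype k] [DecidableEq k] {G : Matrix n n R}
    {V W : Matrix n k R} (hG : IsUnit G) (hGr : IsUnit (Wᵀ * G * V)) {b : n → R} {c : k → R}
    (h : G⁻¹ *ᵥ b = V *ᵥ c) : (Wᵀ * G * V)⁻¹ *ᵥ (Wᵀ *ᵥ b) = c := by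
  have hb : b = G *ᵥ (V *ᵥ c) := by
    rw [← h, mulVec_mulVec, mul_nonsing_inv _ ((isUnit_iff_isUnit_det _).1 hG), one_mulVec]
  have hWb : Wᵀ *ᵥ b = (Wᵀ * G * V) *ᵥ c := by
    simp only [hb, ← mulVec_mulVec]
  rw [hWb, mulVec_mulVec, nonsing_inv_mul _ ((isUnit_iff_isUnit_det _).1 hGr), one_mulVec]

theorem petrovGalerkin_transpose_inv_mulVec [DecidableEq n] [Fintype k] [DecidableEq k]
    {G : Matrix n n R} {V W : Matrix n k R} (hG : IsUnit G) (hGr : IsUnit (Wᵀ * G * V))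
    {b : n → R} {d : k → R} (h : Gᵀ⁻¹ *ᵥ b = W *ᵥ d) :
    (Wᵀ * G * V)ᵀ⁻¹ *ᵥ (Vᵀ *ᵥ b) = d := by
  have htr : (Wᵀ * G * V)ᵀ = Vᵀ * Gᵀ * W := by
    simp only [transpose_mul, transpose_transpose, Matrix.mul_assoc]
  have hGrT : IsUnit (Vᵀ * Gᵀ * W) := htr ▸ (isUnit_transpose _).2 hGr
  rw [htr]
  exact petrovGalerkin_inv_mulVec ((isUnit_transpose _).2 hG) hGrT h

end Matrix

section Deriv

open scoped Matrix.Norms.Operator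

variable {m n 𝕜 : Type*} [Fintype n] [NontriviallyNormedField 𝕜] {s : 𝕜}

theorem hasDerivAt_mulVec [Finite m] {M : 𝕜 → Matrix m n 𝕜} {M' : Matrix m n 𝕜} {v : 𝕜 → n → 𝕜}
    {v' : n → 𝕜} (hM : HasDerivAt M M' s) (hv : HasDerivAt v v' s) :
    HasDerivAt (fun t => M t *ᵥ v t) (M' *ᵥ v s + M s *ᵥ v') s := by
  have := Fintype.ofFinite m
  refine hasDerivAt_pi.2 fun i => ?_
  have hMi (j : n) : HasDerivAt (fun t => M t i j) (M' i j) s :=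
    hasDerivAt_pi.1 (hasDerivAt_pi.1 hM i) j
  have hsum := HasDerivAt.fun_sum (u := Finset.univ) fun j _ =>
    (hMi j).fun_mul (hasDerivAt_pi.1 hv j)
  simpa only [mulVec, dotProduct, Pi.add_apply, ← Finset.sum_add_distrib] using hsum

theorem hasDerivAt_const_mulVec [Finite m] (M : Matrix m n 𝕜) {v : 𝕜 → n → 𝕜} {v' : n → 𝕜}
    (hv : HasDerivAt v v' s) : HasDerivAt (fun t => M *ᵥ v t) (M *ᵥ v') s := by
  have := Fintype.ofFinite m
  simpa only [zero_mulVec, zero_add] using hasDerivAt_mulVec (hasDerivAt_const s M) hv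

theorem hasDerivAt_matrix_inv [CompleteSpace 𝕜] [DecidableEq n] {M : 𝕜 → Matrix n n 𝕜}
    {M' : Matrix n n 𝕜} (hs : IsUnit (M s)) (hM : HasDerivAt M M' s) :
    HasDerivAt (fun t => (M t)⁻¹) (-((M s)⁻¹ * M' * (M s)⁻¹)) s := by
  -- Instance search does not match the entrywise uniformity on matrices with that of the norm.
  have : HasSummableGeomSeries (Matrix n n 𝕜) :=
    @instHasSummableGeomSeriesOfCompleteSpace _ _ (FiniteDimensional.complete 𝕜 _)
  obtain ⟨u, hu⟩ := hs
  have hinv := hasFDerivAt_ringInverse (𝕜 := 𝕜) u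
  simp only [hu, coe_units_inv] at hinv
  simpa only [nonsing_inv_eq_ringInverse] using! hinv.comp_hasDerivAt s hM

theorem hasDerivAt_inv_mulVec [CompleteSpace 𝕜] [DecidableEq n] {M : 𝕜 → Matrix n n 𝕜}
    {M' : Matrix n n 𝕜} {v : 𝕜 → n → 𝕜} {v' : n → 𝕜} (hs : IsUnit (M s))
    (hM : HasDerivAt M M' s) (hv : HasDerivAt v v' s) :
    HasDerivAt (fun t => (M t)⁻¹ *ᵥ v t) ((M s)⁻¹ *ᵥ (v' - M' *ᵥ ((M s)⁻¹ *ᵥ v s))) s := by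
  convert hasDerivAt_mulVec (hasDerivAt_matrix_inv hs hM) hv using 1
  simp only [mulVec_sub, neg_mulVec, ← mulVec_mulVec, neg_add_eq_sub]

end Deriv

section Kronecker

variable {n r : ℕ}

theorem kronecker_mulVec_vkron (V W : Matrix (Fin n) (Fin r) ℂ) (u v : Fin r → ℂ) :
    (V ⊗ₖ W) *ᵥ vkron u v = vkron (V *ᵥ u) (W *ᵥ v) := by
  ext ⟨a, b⟩
  simp only [vkron, mulVec, dotProduct, Fintype.sum_prod_type, kroneckerMap_apply,
    Finset.sum_mul_sum, mul_mul_mul_comm]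

theorem mode2_mulVec_vkron_dotProduct (Q : Matrix (Fin n) (Fin n × Fin n) ℂ)
    (x y z : Fin n → ℂ) : (mode2 Q *ᵥ vkron x y) ⬝ᵥ z = y ⬝ᵥ (Q *ᵥ vkron x z) := by
  calc (mode2 Q *ᵥ vkron x y) ⬝ᵥ z
      = ∑ j, ∑ l, ∑ i, Q i (l, j) * (x l * y i) * z j := by
        simp only [mode2, mulVec, dotProduct, vkron, Fintype.sum_prod_type, Finset.sum_mul]
    _ = ∑ i, ∑ j, ∑ l, Q i (l, j) * (x l * y i) * z j := Finset.sum_comm_cycle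
    _ = ∑ i, ∑ l, ∑ j, y i * (Q i (l, j) * (x l * z j)) := by
        refine Fintype.sum_congr _ _ fun i => Finset.sum_comm.trans ?_
        refine Fintype.sum_congr _ _ fun l => Fintype.sum_congr _ _ fun j => ?_
        ring
    _ = y ⬝ᵥ (Q *ᵥ vkron x z) := by
        simp only [mulVec, dotProduct, vkron, Fintype.sum_prod_type, Finset.mul_sum]

theorem mode2_projection_mulVec_vkron (Q : Matrix (Fin n) (Fin n × Fin n) ℂ)
    (V W : Matrix (Fin n) (Fin r) ℂ) (c d : Fin r → ℂ) :
    mode2 (Wᵀ * Q * (V ⊗ₖ V)) *ᵥ vkron c d = Vᵀ *ᵥ (mode2 Q *ᵥ vkron (V *ᵥ c) (W *ᵥ d)) := by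
  refine dotProduct_eq _ _ fun z => ?_
  simp only [transpose_mulVec_dotProduct, mode2_mulVec_vkron_dotProduct, ← mulVec_mulVec,
    kronecker_mulVec_vkron]
  rw [← transpose_mulVec_dotProduct, transpose_transpose]

theorem qSymm_projection {Q : Matrix (Fin n) (Fin n × Fin n) ℂ} (hQ : QSymm Q)
    (V W : Matrix (Fin n) (Fin r) ℂ) : QSymm (Wᵀ * Q * (V ⊗ₖ V)) := fun u v => by
  simp only [← mulVec_mulVec, kronecker_mulVec_vkron, hQ (V *ᵥ u)]

end Kronecker

section TransferFunction

open scoped Matrix.Norms.Operator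

variable {n : ℕ} {E A : Matrix (Fin n) (Fin n) ℂ} (N : Matrix (Fin n) (Fin n) ℂ)
  (Q : Matrix (Fin n) (Fin n × Fin n) ℂ) (B C : Fin n → ℂ) {s s1 s2 : ℂ}

theorem hasDerivAt_Gm (E A : Matrix (Fin n) (Fin n) ℂ) (s : ℂ) : HasDerivAt (Gm E A) E s := by
  simpa only [one_smul] using! ((hasDerivAt_id s).smul_const E).sub_const A

theorem hasDerivAt_x1 (hG : IsUnit (Gm E A s)) :
    HasDerivAt (x1 E A B) (-((Gm E A s)⁻¹ *ᵥ (E *ᵥ x1 E A B s))) s := by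
  simpa only [zero_sub, mulVec_neg] using!
    hasDerivAt_inv_mulVec hG (hasDerivAt_Gm E A s) (hasDerivAt_const s B)

theorem hasDerivAt_B2 {x' : Fin n → ℂ} (hx : HasDerivAt (x1 E A B) x' s1) :
    HasDerivAt (fun t => B2 E A N Q B t s2)
      (Q *ᵥ vkron x' (x1 E A B s2) + (1/2 : ℂ) • (N *ᵥ x')) s1 := by
  have hkron : HasDerivAt (fun t => vkron (x1 E A B t) (x1 E A B s2))
      (vkron x' (x1 E A B s2)) s1 :=
    hasDerivAt_pi.2 fun p => (hasDerivAt_pi.1 hx p.1).mul_const _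
  exact (hasDerivAt_const_mulVec Q hkron).add
    ((hasDerivAt_const_mulVec N (hx.add_const _)).fun_const_smul _)

theorem hasDerivAt_x2 {b' : Fin n → ℂ} (hG : IsUnit (Gm E A (s1 + s2)))
    (hb : HasDerivAt (fun t => B2 E A N Q B t s2) b' s1) :
    HasDerivAt (fun t => x2 E A N Q B t s2)
      ((Gm E A (s1 + s2))⁻¹ *ᵥ (b' - E *ᵥ x2 E A N Q B s1 s2)) s1 :=
  hasDerivAt_inv_mulVec hG ((hasDerivAt_Gm E A (s1 + s2)).comp_add_const s1 s2) hb

variable {Q} in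
theorem C2_dotProduct (hQ : QSymm Q) (z : Fin n → ℂ) :
    C2 E A N Q B C s1 s2 ⬝ᵥ z =
      y1 E A C (s1 + s2) ⬝ᵥ (Q *ᵥ vkron z (x1 E A B s2) + (1/2 : ℂ) • (N *ᵥ z)) := by
  rw [C2, add_dotProduct, smul_dotProduct, mode2_mulVec_vkron_dotProduct,
    transpose_mulVec_dotProduct, hQ, dotProduct_add, dotProduct_smul]

variable {Q} in
theorem hasDerivAt_H2 (hQ : QSymm Q) (hG1 : IsUnit (Gm E A s1))
    (hG12 : IsUnit (Gm E A (s1 + s2))) :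
    HasDerivAt (fun s => H2 E A N Q B C s s2)
      (-(y1 E A C (s1 + s2) ⬝ᵥ (E *ᵥ x2 E A N Q B s1 s2) +
        y2 E A N Q B C s1 s2 ⬝ᵥ (E *ᵥ x1 E A B s1))) s1 := by
  have hx2 := hasDerivAt_x2 N Q B hG12 (hasDerivAt_B2 N Q B (hasDerivAt_x1 B hG1))
  have hC : HasDerivAt (fun s => H2 E A N Q B C s s2) _ s1 :=
    HasDerivAt.fun_sum (u := Finset.univ) fun j _ => (hasDerivAt_pi.1 hx2 j).const_mul (C j)
  refine hC.congr_deriv (?_ : C ⬝ᵥ _ = _)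
  rw [← transpose_inv_mulVec_dotProduct, ← y1, dotProduct_sub, ← C2_dotProduct N B C hQ,
    dotProduct_neg, ← transpose_inv_mulVec_dotProduct, ← y2]
  ring

end TransferFunction

section ReducedModel

variable {n r : ℕ} {E A N : Matrix (Fin n) (Fin n) ℂ} {Q : Matrix (Fin n) (Fin n × Fin n) ℂ}
  {B C : Fin n → ℂ} {V W : Matrix (Fin n) (Fin r) ℂ} {s s1 s2 : ℂ} {c c1 c2 d d1 d2 : Fin r → ℂ}

theorem Gm_projection (E A : Matrix (Fin n) (Fin n) ℂ) (V W : Matrix (Fin n) (Fin r) ℂ) (s : ℂ) :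
    Gm (Wᵀ * E * V) (Wᵀ * A * V) s = Wᵀ * Gm E A s * V := by
  simp only [Gm, Matrix.mul_sub, Matrix.sub_mul, Matrix.mul_smul, Matrix.smul_mul]

theorem x1_projection (hG : IsUnit (Gm E A s)) (hGr : IsUnit (Wᵀ * Gm E A s * V))
    (hx : x1 E A B s = V *ᵥ c) : x1 (Wᵀ * E * V) (Wᵀ * A * V) (Wᵀ *ᵥ B) s = c := by
  rw [x1, Gm_projection]
  exact petrovGalerkin_inv_mulVec hG hGr hx

theorem y1_projection (hG : IsUnit (Gm E A s)) (hGr : IsUnit (Wᵀ * Gm E A s * V))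
    (hy : y1 E A C s = W *ᵥ d) : y1 (Wᵀ * E * V) (Wᵀ * A * V) (Vᵀ *ᵥ C) s = d := by
  rw [y1, Gm_projection]
  exact petrovGalerkin_transpose_inv_mulVec hG hGr hy

theorem B2_projection (hx1 : x1 E A B s1 = V *ᵥ c1) (hx2 : x1 E A B s2 = V *ᵥ c2)
    (hx1r : x1 (Wᵀ * E * V) (Wᵀ * A * V) (Wᵀ *ᵥ B) s1 = c1)
    (hx2r : x1 (Wᵀ * E * V) (Wᵀ * A * V) (Wᵀ *ᵥ B) s2 = c2) :
    B2 (Wᵀ * E * V) (Wᵀ * A * V) (Wᵀ * N * V) (Wᵀ * Q * (V ⊗ₖ V)) (Wᵀ *ᵥ B) s1 s2 =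
      Wᵀ *ᵥ B2 E A N Q B s1 s2 := by
  simp only [B2, hx1, hx2, hx1r, hx2r, ← mulVec_mulVec, kronecker_mulVec_vkron, mulVec_add,
    mulVec_smul]

theorem C2_projection (hx : x1 E A B s2 = V *ᵥ c) (hy : y1 E A C (s1 + s2) = W *ᵥ d)
    (hxr : x1 (Wᵀ * E * V) (Wᵀ * A * V) (Wᵀ *ᵥ B) s2 = c)
    (hyr : y1 (Wᵀ * E * V) (Wᵀ * A * V) (Vᵀ *ᵥ C) (s1 + s2) = d) :
    C2 (Wᵀ * E * V) (Wᵀ * A * V) (Wᵀ * N * V) (Wᵀ * Q * (V ⊗ₖ V)) (Wᵀ *ᵥ B) (Vᵀ *ᵥ C) s1 s2 =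
      Vᵀ *ᵥ C2 E A N Q B C s1 s2 := by
  simp only [C2, hx, hy, hxr, hyr, mode2_projection_mulVec_vkron, transpose_mul,
    transpose_transpose, ← mulVec_mulVec, mulVec_add, mulVec_smul]

theorem x2_projection (hG : IsUnit (Gm E A (s1 + s2)))
    (hGr : IsUnit (Wᵀ * Gm E A (s1 + s2) * V))
    (hx1 : x1 E A B s1 = V *ᵥ c1) (hx2 : x1 E A B s2 = V *ᵥ c2)
    (hx1r : x1 (Wᵀ * E * V) (Wᵀ * A * V) (Wᵀ *ᵥ B) s1 = c1)
    (hx2r : x1 (Wᵀ * E * V) (Wᵀ * A * V) (Wᵀ *ᵥ B) s2 = c2)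
    (hx12 : x2 E A N Q B s1 s2 = V *ᵥ c) :
    x2 (Wᵀ * E * V) (Wᵀ * A * V) (Wᵀ * N * V) (Wᵀ * Q * (V ⊗ₖ V)) (Wᵀ *ᵥ B) s1 s2 = c := by
  rw [x2, Gm_projection, B2_projection hx1 hx2 hx1r hx2r]
  exact petrovGalerkin_inv_mulVec hG hGr hx12

theorem y2_projection (hG : IsUnit (Gm E A s1))
    (hGr : IsUnit (Wᵀ * Gm E A s1 * V)) (hx : x1 E A B s2 = V *ᵥ c)
    (hy1 : y1 E A C (s1 + s2) = W *ᵥ d1)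
    (hxr : x1 (Wᵀ * E * V) (Wᵀ * A * V) (Wᵀ *ᵥ B) s2 = c)
    (hy1r : y1 (Wᵀ * E * V) (Wᵀ * A * V) (Vᵀ *ᵥ C) (s1 + s2) = d1)
    (hy2 : y2 E A N Q B C s1 s2 = W *ᵥ d2) :
    y2 (Wᵀ * E * V) (Wᵀ * A * V) (Wᵀ * N * V) (Wᵀ * Q * (V ⊗ₖ V)) (Wᵀ *ᵥ B) (Vᵀ *ᵥ C) s1 s2 =
      d2 := by
  rw [y2, Gm_projection, C2_projection hx hy1 hxr hy1r]
  exact petrovGalerkin_transpose_inv_mulVec hG hGr hy2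

end ReducedModel

theorem reduced_H2_first_partial_matching {n r : ℕ}
    (E A N : Matrix (Fin n) (Fin n) ℂ) (Q : Matrix (Fin n) (Fin n × Fin n) ℂ)
    (B C : Fin n → ℂ) (V W : Matrix (Fin n) (Fin r) ℂ) (σ1 σ2 : ℂ)
    (hQ : QSymm Q)
    (hG1 : IsUnit (Gm E A σ1)) (hG2 : IsUnit (Gm E A σ2))
    (hG12 : IsUnit (Gm E A (σ1 + σ2)))
    (hGr1 : IsUnit (Wᵀ * Gm E A σ1 * V)) (hGr2 : IsUnit (Wᵀ * Gm E A σ2 * V))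
    (hGr12 : IsUnit (Wᵀ * Gm E A (σ1 + σ2) * V))
    (hx1 : ∃ c : Fin r → ℂ, x1 E A B σ1 = V *ᵥ c)
    (hx2 : ∃ c : Fin r → ℂ, x1 E A B σ2 = V *ᵥ c)
    (hx12 : ∃ c : Fin r → ℂ, x2 E A N Q B σ1 σ2 = V *ᵥ c)
    (hy1 : ∃ d : Fin r → ℂ, y1 E A C (σ1 + σ2) = W *ᵥ d)
    (hy2 : ∃ d : Fin r → ℂ, y2 E A N Q B C σ1 σ2 = W *ᵥ d) :
    deriv (fun s => H2 E A N Q B C s σ2) σ1 =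
      deriv (fun s => H2 (Wᵀ * E * V) (Wᵀ * A * V) (Wᵀ * N * V) (Wᵀ * Q * (V ⊗ₖ V))
        (Wᵀ *ᵥ B) (Vᵀ *ᵥ C) s σ2) σ1 := by
  obtain ⟨c₁, hx1⟩ := hx1
  obtain ⟨c₂, hx2⟩ := hx2
  obtain ⟨c₁₂, hx12⟩ := hx12
  obtain ⟨d₁, hy1⟩ := hy1
  obtain ⟨d₂, hy2⟩ := hy2
  have hx1r := x1_projection hG1 hGr1 hx1
  have hx2r := x1_projection hG2 hGr2 hx2
  have hy1r := y1_projection hG12 hGr12 hy1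
  have hx12r := x2_projection hG12 hGr12 hx1 hx2 hx1r hx2r hx12
  have hy2r := y2_projection hG1 hGr1 hx2 hy1 hx2r hy1r hy2
  rw [← Gm_projection] at hGr1 hGr12
  rw [(hasDerivAt_H2 N B C hQ hG1 hG12).deriv,
    (hasDerivAt_H2 _ _ _ (qSymm_projection hQ V W) hGr1 hGr12).deriv,
    hx1r, hy1r, hx12r, hy2r, hx1, hy1, hx12, hy2]
  simp only [← mulVec_mulVec, dotProduct_mulVec _ Wᵀ, vecMul_transpose]
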